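/- arXiv:1802.05671 — 2 statements merged into one kernel-verified Lean document; each statement's English description precedes it below -/
import Mathlib

section
/- The origin is a Center of the Whorl normal form: for every point p = (p₁,p₂) ∈ ℝ² with p ≠ (0,0), |p₁| < 1, and H(p) < 1/6 (where H(x,y) = y²/2 + x⁶/6 − x⁴/2 + x²/2), there exist a period T > 0 and a differentiable curve γ : ℝ → ℝ² with γ(0) = p, γ'(t) = F(γ(t)) for all t ∈ ℝ, and γ(t + T) = γ(t) for all t ∈ ℝ, where F(x,y) = (y, −x(x²−1)²); that is, the solution through p is a nonconstant closed orbit surrounding the origin. -/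
/-- The Whorl normal form vector field `F(x,y) = (y, -x(x²-1)²)`. -/
def whorlField : ℝ × ℝ → ℝ × ℝ :=
  fun p => (p.2, -p.1 * (p.1 ^ 2 - 1) ^ 2)

/-- The conserved energy of the Whorl normal form:
`H(x,y) = y²/2 + x⁶/6 - x⁴/2 + x²/2`. -/
noncomputable def whorlEnergy : ℝ × ℝ → ℝ :=
  fun p => p.2 ^ 2 / 2 + p.1 ^ 6 / 6 - p.1 ^ 4 / 2 + p.1 ^ 2 / 2

/-!
In the coordinate `u = x √(1 - x² + x⁴/3)` the energy is `(y² + u²)/2`, so each energy level inside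
the cusps is a circle `(y, u) = (r cos θ, r sin θ)`. Newton's equation `ẍ = -u u'(x)` then reduces
to the scalar equation `θ̇ = u'(x)`, whose right-hand side is a positive periodic function of `θ`;
hence `θ` advances by `2π` in a finite time.
-/

open Function Set Filter

section PeriodicSpeed

variable {f : ℝ → ℝ} {P : ℝ}

theorem strictMono_intervalIntegral_of_pos (hf : Continuous f) (hpos : ∀ s, 0 < f s) (a : ℝ) :
    StrictMono fun x => ∫ s in a..x, f s :=
  strictMono_of_hasDerivAt_pos (fun x => (hf.integral_hasStrictDerivAt a x).hasDerivAt) hpos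

theorem surjective_intervalIntegral_of_periodic (hf : Continuous f) (hpos : ∀ s, 0 < f s)
    (hper : Periodic f P) (hP : 0 < P) : Surjective fun x => ∫ s in 0..x, f s :=
  (intervalIntegral.continuous_primitive (fun _ _ => hf.intervalIntegrable _ _) 0).surjective
    (hper.tendsto_atTop_intervalIntegral_of_pos' (hf.intervalIntegrable 0 P) hpos hP)
    (hper.tendsto_atBot_intervalIntegral_of_pos' (hf.intervalIntegrable 0 P) hpos hP)

theorem exists_solution_add_period_of_periodic (hf : Continuous f) (hpos : ∀ s, 0 < f s)
    (hper : Periodic f P) (hP : 0 < P) (a : ℝ) :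
    ∃ T > (0 : ℝ), ∃ θ : ℝ → ℝ,
      θ 0 = a ∧ (∀ t, HasDerivAt θ (f (θ t)) t) ∧ ∀ t, θ (t + T) = θ t + P := by
  have hg : Continuous fun s => (f s)⁻¹ := hf.inv₀ fun s => (hpos s).ne'
  have hgpos : ∀ s, 0 < (f s)⁻¹ := fun s => inv_pos.2 (hpos s)
  have hgper : Periodic (fun s => (f s)⁻¹) P := hper.comp (·⁻¹)
  -- Separation of variables: the solution is the inverse of the travel time `∫ ds / f s`.
  let τ : ℝ ≃o ℝ := (strictMono_intervalIntegral_of_pos hg hgpos 0).orderIsoOfSurjective _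
    (surjective_intervalIntegral_of_periodic hg hgpos hgper hP)
  have τ_add_period (x : ℝ) : τ (x + P) = τ x + ∫ s in 0..P, (f s)⁻¹ := by
    have h := hgper.intervalIntegral_add_eq_add 0 x fun _ _ => hg.intervalIntegrable _ _
    rwa [zero_add] at h
  have hasDerivAt_τ_symm (t : ℝ) : HasDerivAt τ.symm (f (τ.symm t)) t := by
    have hτ : HasDerivAt τ (f (τ.symm t))⁻¹ (τ.symm t) :=
      (hg.integral_hasStrictDerivAt 0 _).hasDerivAt
    simpa using hτ.of_local_left_inverse τ.symm.continuous.continuousAt (hgpos _).ne'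
      (.of_forall τ.apply_symm_apply)
  refine ⟨∫ s in 0..P, (f s)⁻¹, ?_, fun t => τ.symm (t + τ a), ?_, fun t => ?_, fun t => ?_⟩
  · exact intervalIntegral.intervalIntegral_pos_of_pos (hg.intervalIntegrable _ _) hgpos hP
  · simp only [zero_add, OrderIso.symm_apply_apply]
  · exact (hasDerivAt_τ_symm _).comp_add_const t (τ a)
  · rw [OrderIso.symm_apply_eq, τ_add_period, OrderIso.apply_symm_apply]
    ring

end PeriodicSpeed

theorem exists_periodic_solution_of_energy_coordinate (e : OpenPartialHomeomorph ℝ ℝ)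
    {e' : ℝ → ℝ} (hderiv : ∀ x ∈ e.source, HasDerivAt e (e' x) x)
    (hcont : ContinuousOn e' e.source) (hpos : ∀ x ∈ e.source, 0 < e' x)
    {p : ℝ × ℝ} (hp : p.1 ∈ e.source)
    (hlevel : ∀ v, v ^ 2 ≤ p.2 ^ 2 + e p.1 ^ 2 → v ∈ e.target) :
    ∃ T > (0 : ℝ), ∃ γ : ℝ → ℝ × ℝ, γ 0 = p ∧
      (∀ t, HasDerivAt γ ((γ t).2, -(e (γ t).1 * e' (γ t).1)) t) ∧ ∀ t, γ (t + T) = γ t := by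
  obtain ⟨r, a, hcos, hsin⟩ : ∃ r a : ℝ, r * Real.cos a = p.2 ∧ r * Real.sin a = e p.1 :=
    let z : ℂ := ⟨p.2, e p.1⟩
    ⟨‖z‖, z.arg, z.norm_mul_cos_arg, z.norm_mul_sin_arg⟩
  have hradius : r ^ 2 = p.2 ^ 2 + e p.1 ^ 2 := by
    rw [← hcos, ← hsin]
    linear_combination -r ^ 2 * Real.sin_sq_add_cos_sq a
  have htarget (s : ℝ) : r * Real.sin s ∈ e.target := by
    refine hlevel _ ?_
    rw [← hradius, mul_pow]
    exact mul_le_of_le_one_right (sq_nonneg r) (Real.sin_sq_le_one s)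
  let x (s : ℝ) : ℝ := e.symm (r * Real.sin s)
  have hsource (s : ℝ) : x s ∈ e.source := e.map_target (htarget s)
  have hx : Continuous x := e.continuousOn_symm.comp_continuous (by fun_prop) htarget
  have hper : Periodic (fun s => e' (x s)) (2 * Real.pi) := fun s => by
    simp only [x, Real.sin_add_two_pi]
  have hspeed : Continuous fun s => e' (x s) := hcont.comp_continuous hx hsource
  obtain ⟨T, hT, θ, hθ₀, hθ, hθT⟩ := exists_solution_add_period_of_periodic hspeed
    (fun s => hpos _ (hsource s)) hper Real.two_pi_pos a
  refine ⟨T, hT, fun t => (x (θ t), r * Real.cos (θ t)), ?_, fun t => ?_, fun t => ?_⟩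
  · simp only [x, hθ₀, hsin, hcos, e.left_inv hp]
  · have he' : e' (x (θ t)) ≠ 0 := (hpos _ (hsource _)).ne'
    have hx' : HasDerivAt (fun t => x (θ t)) (r * Real.cos (θ t)) t := by
      refine ((e.hasDerivAt_symm (htarget _) he' (hderiv _ (hsource _))).comp t
        ((hθ t).sin.const_mul r)).congr_deriv ?_
      change (e' (x (θ t)))⁻¹ * _ = _
      field_simp
    have hy' : HasDerivAt (fun t => r * Real.cos (θ t)) (-(e (x (θ t)) * e' (x (θ t)))) t := by
      refine ((hθ t).cos.const_mul r).congr_deriv ?_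
      rw [e.right_inv (htarget _)]
      ring
    exact hx'.prodMk hy'
  · simp only [x, hθT, Real.sin_add_two_pi, Real.cos_add_two_pi]

/-- The positive factor `√(1 - x² + x⁴/3)` in the energy coordinate `whorlCoord`. -/
noncomputable def whorlRoot (x : ℝ) : ℝ := √(1 - x ^ 2 + x ^ 4 / 3)

/-- The energy coordinate `u` of the Whorl normal form: the odd increasing function of `x` for which
`u² / 2` is the potential `x⁶/6 - x⁴/2 + x²/2`. -/
noncomputable def whorlCoord (x : ℝ) : ℝ := x * whorlRoot x

theorem one_fourth_le_whorlRoot_radicand (x : ℝ) : 1 / 4 ≤ 1 - x ^ 2 + x ^ 4 / 3 := by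
  linear_combination sq_nonneg (x ^ 2 - 3 / 2) / 3

theorem one_half_le_whorlRoot (x : ℝ) : 1 / 2 ≤ whorlRoot x :=
  Real.le_sqrt_of_sq_le (by linarith [one_fourth_le_whorlRoot_radicand x])

theorem whorlRoot_pos (x : ℝ) : 0 < whorlRoot x :=
  one_half_pos.trans_le (one_half_le_whorlRoot x)

theorem whorlRoot_sq (x : ℝ) : whorlRoot x ^ 2 = 1 - x ^ 2 + x ^ 4 / 3 :=
  Real.sq_sqrt (by linarith [one_fourth_le_whorlRoot_radicand x])

theorem hasDerivAt_whorlRoot (x : ℝ) :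
    HasDerivAt whorlRoot ((-(2 * x) + 4 * x ^ 3 / 3) / (2 * whorlRoot x)) x := by
  have hrad : HasDerivAt (fun x : ℝ => 1 - x ^ 2 + x ^ 4 / 3) (-(2 * x) + 4 * x ^ 3 / 3) x :=
    (((hasDerivAt_pow 2 x).const_sub 1).add ((hasDerivAt_pow 4 x).div_const 3)).congr_deriv
      (by norm_num)
  exact hrad.sqrt (by linarith [one_fourth_le_whorlRoot_radicand x])

theorem continuous_whorlRoot : Continuous whorlRoot := by
  unfold whorlRoot
  fun_prop

theorem three_mul_whorlCoord_sq (x : ℝ) : 3 * whorlCoord x ^ 2 = 1 - (1 - x ^ 2) ^ 3 := by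
  rw [whorlCoord, mul_pow, whorlRoot_sq]
  ring

theorem sq_add_whorlCoord_sq (p : ℝ × ℝ) : p.2 ^ 2 + whorlCoord p.1 ^ 2 = 2 * whorlEnergy p := by
  rw [whorlEnergy]
  linear_combination three_mul_whorlCoord_sq p.1 / 3

theorem whorlCoord_neg (x : ℝ) : whorlCoord (-x) = -whorlCoord x := by
  simp only [whorlCoord, whorlRoot, even_two.neg_pow, (by decide : Even 4).neg_pow, neg_mul]

theorem strictMono_whorlCoord : StrictMono whorlCoord := by
  refine strictMono_of_odd_strictMonoOn_nonneg whorlCoord_neg fun x hx y hy hxy => ?_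
  have hsq : x ^ 2 < y ^ 2 := pow_lt_pow_left₀ hxy hx two_ne_zero
  have hcube : (1 - y ^ 2) ^ 3 < (1 - x ^ 2) ^ 3 :=
    (by decide : Odd 3).pow_lt_pow.2 (by linarith)
  refine lt_of_pow_lt_pow_left₀ 2 (mul_nonneg hy (whorlRoot_pos y).le) ?_
  linarith [three_mul_whorlCoord_sq x, three_mul_whorlCoord_sq y]

theorem tendsto_whorlCoord_atTop : Tendsto whorlCoord atTop atTop := by
  refine tendsto_atTop_mono' _ ?_ (tendsto_id.atTop_mul_const (one_half_pos (α := ℝ)))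
  filter_upwards [eventually_ge_atTop 0] with x hx
  exact mul_le_mul_of_nonneg_left (one_half_le_whorlRoot x) hx

theorem surjective_whorlCoord : Surjective whorlCoord := by
  have hcont : Continuous whorlCoord := continuous_id.mul continuous_whorlRoot
  refine hcont.surjective tendsto_whorlCoord_atTop ?_
  have h := tendsto_neg_atTop_atBot.comp (tendsto_whorlCoord_atTop.comp tendsto_neg_atBot_atTop)
  exact h.congr fun x => by simp only [comp_apply, whorlCoord_neg, neg_neg]

theorem hasDerivAt_whorlCoord (x : ℝ) :
    HasDerivAt whorlCoord ((x ^ 2 - 1) ^ 2 / whorlRoot x) x := by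
  refine ((hasDerivAt_id x).mul (hasDerivAt_whorlRoot x)).congr_deriv ?_
  have hroot := (whorlRoot_pos x).ne'
  simp only [id]
  field_simp
  rw [whorlRoot_sq]
  ring

theorem deriv_whorlCoord (x : ℝ) : deriv whorlCoord x = (x ^ 2 - 1) ^ 2 / whorlRoot x :=
  (hasDerivAt_whorlCoord x).deriv

theorem continuous_deriv_whorlCoord : Continuous (deriv whorlCoord) := by
  rw [funext deriv_whorlCoord]
  exact Continuous.div (by fun_prop) continuous_whorlRoot fun x => (whorlRoot_pos x).ne'

theorem deriv_whorlCoord_pos {x : ℝ} (hx : |x| < 1) : 0 < deriv whorlCoord x := by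
  have hsq : x ^ 2 - 1 ≠ 0 := (sub_neg.2 ((sq_lt_one_iff_abs_lt_one x).2 hx)).ne
  have hroot := whorlRoot_pos x
  rw [deriv_whorlCoord]
  positivity

theorem whorlCoord_mul_deriv (x : ℝ) :
    whorlCoord x * deriv whorlCoord x = x * (x ^ 2 - 1) ^ 2 := by
  have hroot := (whorlRoot_pos x).ne'
  rw [deriv_whorlCoord, whorlCoord]
  field_simp

/-- The energy coordinate restricted to `(-1, 1)`, between the cusps, where its derivative does not
vanish. -/
noncomputable def whorlChart : OpenPartialHomeomorph ℝ ℝ :=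
  let e := strictMono_whorlCoord.orderIsoOfSurjective _ surjective_whorlCoord
  e.toHomeomorph.toOpenPartialHomeomorphOfImageEq (Ioo (-1) 1) isOpen_Ioo
    (Ioo (whorlCoord (-1)) (whorlCoord 1)) (e.image_Ioo (-1) 1)

theorem mem_whorlChart_target {v : ℝ} (hv : 3 * v ^ 2 < 1) : v ∈ whorlChart.target := by
  have hone : 3 * whorlCoord 1 ^ 2 = 1 := by
    rw [three_mul_whorlCoord_sq]
    norm_num
  have hnonneg : 0 ≤ whorlCoord 1 := mul_nonneg zero_le_one (whorlRoot_pos 1).le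
  change whorlCoord (-1) < v ∧ v < whorlCoord 1
  rw [whorlCoord_neg]
  exact abs_lt.1 (abs_lt_of_sq_lt_sq (by linarith) hnonneg)

/-- the origin is a Center of the Whorl normal form: through
every point `p ≠ (0,0)` with `|p₁| < 1` and `H(p) < 1/6` there passes a
nonconstant periodic solution. -/
theorem whorl_origin_center (p : ℝ × ℝ)
    (hp : p ≠ (0, 0)) (hx : |p.1| < 1) (hH : whorlEnergy p < 1 / 6) :
    ∃ T > (0 : ℝ), ∃ γ : ℝ → ℝ × ℝ,
      γ 0 = p ∧
      (∀ t : ℝ, HasDerivAt γ (whorlField (γ t)) t) ∧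
      ∀ t : ℝ, γ (t + T) = γ t := by
  have hlevel (v : ℝ) (hv : v ^ 2 ≤ p.2 ^ 2 + whorlCoord p.1 ^ 2) : v ∈ whorlChart.target := by
    rw [sq_add_whorlCoord_sq] at hv
    exact mem_whorlChart_target (by linarith)
  obtain ⟨T, hT, γ, hγ₀, hγ, hγT⟩ := exists_periodic_solution_of_energy_coordinate whorlChart
    (fun x _ => (hasDerivAt_whorlCoord x).differentiableAt.hasDerivAt)
    continuous_deriv_whorlCoord.continuousOn (fun _ h => deriv_whorlCoord_pos (abs_lt.2 h))
    (abs_lt.1 hx) hlevel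
  refine ⟨T, hT, γ, hγ₀, fun t => (hγ t).congr_deriv ?_, hγT⟩
  rw [whorlField, neg_mul, ← whorlCoord_mul_deriv]
  rfl
end

section
/- Let A be an invertible 2×2 real matrix and let γ(θ) = A·(cos θ, sin θ) with components γ₁(θ), γ₂(θ). Then γ₁(θ)² + γ₂(θ)² > 0 for all θ, and the Poincaré index integral satisfies (1/(2π)) ∫₀^{2π} (γ₁(θ)·γ₂'(θ) − γ₂(θ)·γ₁'(θ)) / (γ₁(θ)² + γ₂(θ)²) dθ = 1 if det A > 0, and = −1 if det A < 0. In particular, the index of a nondegenerate singular point of a planar vector field, computed from its linearization, is −1 if the point is a Saddle (det A < 0) and +1 otherwise. -/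
open Real

/-- The image of the unit circle under the linear map given by the matrix `A`:
`γ(θ) = A·(cos θ, sin θ)`. -/
noncomputable def linCircle (A : Matrix (Fin 2) (Fin 2) ℝ) (θ : ℝ) : Fin 2 → ℝ :=
  A.mulVec ![Real.cos θ, Real.sin θ]

/-!
Identify `ℝ²` with `ℂ`, so that the index of a closed curve `z` is the imaginary part of
`(1/2π) ∮ z'/z`. A real-linear map has the form `z ↦ α z + β z̄`, with determinant `|α|² - |β|²`,
and sends the unit circle to `α e^{iθ} + β e^{-iθ}`. The sign of the determinant decides which of
the two terms dominates; as in Rouché's theorem the dominant term alone determines the index,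
because the quotient of the sum by that term stays in the disc of radius `1` around `1`, where the
principal logarithm is smooth, and hence has index `0`.
-/

section LogDeriv

variable {z w : ℝ → ℂ} {a b : ℝ}

theorem continuous_logDeriv_of_contDiff (hz : ContDiff ℝ 1 z) (hz₀ : ∀ t, z t ≠ 0) :
    Continuous (logDeriv z) :=
  (hz.continuous_deriv le_rfl).div hz.continuous hz₀

theorem integral_logDeriv_of_mem_slitPlane (hz : ∀ t ∈ Set.uIcc a b, DifferentiableAt ℝ z t)
    (hslit : ∀ t ∈ Set.uIcc a b, z t ∈ Complex.slitPlane)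
    (hint : IntervalIntegrable (logDeriv z) MeasureTheory.volume a b) :
    ∫ t in a..b, logDeriv z t = Complex.log (z b) - Complex.log (z a) :=
  intervalIntegral.integral_eq_sub_of_hasDerivAt
    (fun t ht => (hz t ht).hasDerivAt.clog_real (hslit t ht)) hint

theorem div_mem_slitPlane_of_norm_sub_lt {x y : ℂ} (h : ‖x - y‖ < ‖y‖) :
    x / y ∈ Complex.slitPlane := by
  have hy : 0 < ‖y‖ := (norm_nonneg _).trans_lt h
  have hxy : ‖(x - y) / y‖ < 1 := by rwa [norm_div, div_lt_one hy]
  have hsum : 1 + (x - y) / y = x / y := by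
    rw [sub_div, div_self (norm_pos_iff.mp hy), add_sub_cancel]
  exact hsum ▸ Complex.mem_slitPlane_of_norm_lt_one hxy

theorem integral_logDeriv_eq_of_norm_sub_lt (hz : ∀ t ∈ Set.uIcc a b, DifferentiableAt ℝ z t)
    (hw : ∀ t ∈ Set.uIcc a b, DifferentiableAt ℝ w t)
    (hz_int : IntervalIntegrable (logDeriv z) MeasureTheory.volume a b)
    (hw_int : IntervalIntegrable (logDeriv w) MeasureTheory.volume a b)
    (hz_closed : z a = z b) (hw_closed : w a = w b)
    (hlt : ∀ t ∈ Set.uIcc a b, ‖z t - w t‖ < ‖w t‖) :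
    ∫ t in a..b, logDeriv z t = ∫ t in a..b, logDeriv w t := by
  have hslit : ∀ t ∈ Set.uIcc a b, z t / w t ∈ Complex.slitPlane :=
    fun t ht => div_mem_slitPlane_of_norm_sub_lt (hlt t ht)
  have hne : ∀ t ∈ Set.uIcc a b, z t ≠ 0 ∧ w t ≠ 0 :=
    fun t ht => div_ne_zero_iff.mp (Complex.slitPlane_ne_zero (hslit t ht))
  have hdiv : Set.EqOn (logDeriv fun s => z s / w s) (fun t => logDeriv z t - logDeriv w t)
      (Set.uIcc a b) :=
    fun t ht => logDeriv_div t (hne t ht).1 (hne t ht).2 (hz t ht) (hw t ht)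
  have hquot : ∫ t in a..b, logDeriv (fun s => z s / w s) t = 0 := by
    rw [integral_logDeriv_of_mem_slitPlane (fun t ht => (hz t ht).fun_div (hw t ht) (hne t ht).2)
      hslit ((hz_int.sub hw_int).congr (hdiv.symm.mono Set.uIoc_subset_uIcc)),
      hz_closed, hw_closed, sub_self]
  rw [← sub_eq_zero, ← intervalIntegral.integral_sub hz_int hw_int,
    ← intervalIntegral.integral_congr hdiv, hquot]

theorem logDeriv_const_mul_exp_mul_I {c : ℂ} (hc : c ≠ 0) (m : ℂ) (t : ℝ) :
    logDeriv (fun s : ℝ => c * Complex.exp (m * s * Complex.I)) t = m * Complex.I := by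
  have hlin : HasDerivAt (fun s : ℝ => m * s * Complex.I) (m * Complex.I) t := by
    simpa only [id_eq, Complex.ofReal_one, mul_one] using!
      ((hasDerivAt_id t).ofReal_comp.const_mul m).mul_const Complex.I
  rw [logDeriv_const_mul t c hc, logDeriv_apply, hlin.cexp.deriv,
    mul_div_cancel_left₀ _ (Complex.exp_ne_zero _)]

theorem norm_exp_int_mul_ofReal_mul_I (m : ℤ) (t : ℝ) : ‖Complex.exp (m * t * Complex.I)‖ = 1 := by
  exact_mod_cast Complex.norm_exp_ofReal_mul_I (m * t)

theorem exp_int_mul_zero_eq_exp_int_mul_two_pi (m : ℤ) :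
    Complex.exp (m * (0 : ℝ) * Complex.I) = Complex.exp (m * (2 * π : ℝ) * Complex.I) := by
  rw [Complex.ofReal_zero, mul_zero, zero_mul, Complex.exp_zero, mul_assoc, Complex.ofReal_mul,
    Complex.ofReal_ofNat, Complex.exp_int_mul_two_pi_mul_I]

section TwoTerms

variable {α β : ℂ}

theorem exp_add_exp_ne_zero (h : ‖β‖ < ‖α‖) (m n : ℤ) (t : ℝ) :
    α * Complex.exp (m * t * Complex.I) + β * Complex.exp (n * t * Complex.I) ≠ 0 := by
  intro h₀
  have hnorm := congrArg norm (eq_neg_of_add_eq_zero_left h₀)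
  simp only [norm_neg, norm_mul, norm_exp_int_mul_ofReal_mul_I, mul_one] at hnorm
  exact h.ne' hnorm

theorem continuous_logDeriv_exp_add_exp (h : ‖β‖ < ‖α‖) (m n : ℤ) :
    Continuous (logDeriv fun s : ℝ =>
      α * Complex.exp (m * s * Complex.I) + β * Complex.exp (n * s * Complex.I)) := by
  have hofReal : ContDiff ℝ 1 Complex.ofReal := Complex.ofRealCLM.contDiff
  exact continuous_logDeriv_of_contDiff (by fun_prop) (exp_add_exp_ne_zero h m n)

theorem integral_logDeriv_exp_add_exp (h : ‖β‖ < ‖α‖) (m n : ℤ) :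
    ∫ t in (0 : ℝ)..(2 * π), logDeriv (fun s : ℝ =>
      α * Complex.exp (m * s * Complex.I) + β * Complex.exp (n * s * Complex.I)) t =
      2 * π * m * Complex.I := by
  have hα : α ≠ 0 := norm_pos_iff.mp ((norm_nonneg β).trans_lt h)
  have hdom : logDeriv (fun s : ℝ => α * Complex.exp (m * s * Complex.I)) =
      fun _ => m * Complex.I :=
    funext (logDeriv_const_mul_exp_mul_I hα m)
  rw [integral_logDeriv_eq_of_norm_sub_lt (w := fun s => α * Complex.exp (m * s * Complex.I))]
  · rw [hdom, intervalIntegral.integral_const, sub_zero, Complex.real_smul]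
    push_cast
    ring
  · fun_prop
  · fun_prop
  · exact (continuous_logDeriv_exp_add_exp h m n).intervalIntegrable _ _
  · exact hdom ▸ intervalIntegrable_const
  · simp only [exp_int_mul_zero_eq_exp_int_mul_two_pi]
  · simp only [exp_int_mul_zero_eq_exp_int_mul_two_pi]
  · intro t _
    simpa only [add_sub_cancel_left, norm_mul, norm_exp_int_mul_ofReal_mul_I, mul_one] using h

end TwoTerms

end LogDeriv

/-- The Poincaré index `(1/2π) ∮ (x dy - y dx) / (x² + y²)` of a closed plane curve
`z = x + iy`, parametrized by `[0, 2π]`: the number of turns that it makes around the origin. -/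
noncomputable def poincareIndex (z : ℝ → ℂ) : ℝ :=
  (1 / (2 * π)) * ∫ θ in (0 : ℝ)..(2 * π),
    ((z θ).re * deriv (fun s => (z s).im) θ - (z θ).im * deriv (fun s => (z s).re) θ) /
      ((z θ).re ^ 2 + (z θ).im ^ 2)

theorem im_logDeriv {z : ℝ → ℂ} {t : ℝ} (hz : DifferentiableAt ℝ z t) :
    (logDeriv z t).im =
      ((z t).re * deriv (fun s => (z s).im) t - (z t).im * deriv (fun s => (z s).re) t) /
        ((z t).re ^ 2 + (z t).im ^ 2) := by
  have hre : deriv (fun s => (z s).re) t = (deriv z t).re :=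
    (Complex.reCLM.hasFDerivAt.comp_hasDerivAt t hz.hasDerivAt).deriv
  have him : deriv (fun s => (z s).im) t = (deriv z t).im :=
    (Complex.imCLM.hasFDerivAt.comp_hasDerivAt t hz.hasDerivAt).deriv
  rw [hre, him, logDeriv_apply, Complex.div_im, Complex.normSq_apply]
  ring

theorem poincareIndex_eq_im_integral_logDeriv {z : ℝ → ℂ}
    (hz : ∀ t ∈ Set.uIcc 0 (2 * π), DifferentiableAt ℝ z t)
    (hint : IntervalIntegrable (logDeriv z) MeasureTheory.volume 0 (2 * π)) :
    poincareIndex z = (1 / (2 * π)) * (∫ t in (0 : ℝ)..(2 * π), logDeriv z t).im := by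
  have him : (∫ t in (0 : ℝ)..(2 * π), (logDeriv z t).im) =
      (∫ t in (0 : ℝ)..(2 * π), logDeriv z t).im :=
    intervalIntegral.intervalIntegral_im hint
  rw [poincareIndex, ← him, intervalIntegral.integral_congr fun t ht => im_logDeriv (hz t ht)]

theorem poincareIndex_exp_add_exp {α β : ℂ} (h : ‖β‖ < ‖α‖) (m n : ℤ) :
    poincareIndex (fun s : ℝ =>
      α * Complex.exp (m * s * Complex.I) + β * Complex.exp (n * s * Complex.I)) = m := by
  have him : (2 * π * m * Complex.I : ℂ).im = 2 * π * m := by simp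
  rw [poincareIndex_eq_im_integral_logDeriv (by fun_prop)
      ((continuous_logDeriv_exp_add_exp h m n).intervalIntegrable _ _),
    integral_logDeriv_exp_add_exp h, him, ← mul_assoc, one_div_mul_cancel two_pi_pos.ne', one_mul]

section LinearMap

open scoped ComplexConjugate

variable (A : Matrix (Fin 2) (Fin 2) ℝ)

/-- The coefficient `α` when the real-linear map `A` is written as `z ↦ α z + β z̄` under the
identification of `(x, y)` with `x + iy`; it is the complex-linear part of `A`. -/
noncomputable def linearCoeff : ℂ :=
  ⟨(A 0 0 + A 1 1) / 2, (A 1 0 - A 0 1) / 2⟩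

/-- The coefficient `β` when the real-linear map `A` is written as `z ↦ α z + β z̄` under the
identification of `(x, y)` with `x + iy`; it is the conjugate-linear part of `A`. -/
noncomputable def conjLinearCoeff : ℂ :=
  ⟨(A 0 0 - A 1 1) / 2, (A 1 0 + A 0 1) / 2⟩

theorem det_eq_normSq_sub_normSq :
    A.det = Complex.normSq (linearCoeff A) - Complex.normSq (conjLinearCoeff A) := by
  rw [Matrix.det_fin_two, linearCoeff, conjLinearCoeff, Complex.normSq_mk, Complex.normSq_mk]
  ring

theorem det_pos_iff_norm_conjLinearCoeff_lt :
    0 < A.det ↔ ‖conjLinearCoeff A‖ < ‖linearCoeff A‖ := by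
  rw [det_eq_normSq_sub_normSq, sub_pos, Complex.normSq_eq_norm_sq, Complex.normSq_eq_norm_sq,
    sq_lt_sq₀ (norm_nonneg _) (norm_nonneg _)]

theorem det_neg_iff_norm_linearCoeff_lt :
    A.det < 0 ↔ ‖linearCoeff A‖ < ‖conjLinearCoeff A‖ := by
  rw [det_eq_normSq_sub_normSq, sub_neg, Complex.normSq_eq_norm_sq, Complex.normSq_eq_norm_sq,
    sq_lt_sq₀ (norm_nonneg _) (norm_nonneg _)]

theorem mulVec_eq_linearCoeff_mul_add_conjLinearCoeff_mul (u : ℂ) :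
    (⟨A.mulVec ![u.re, u.im] 0, A.mulVec ![u.re, u.im] 1⟩ : ℂ) =
      linearCoeff A * u + conjLinearCoeff A * conj u := by
  have hrow : ∀ i, A.mulVec ![u.re, u.im] i = A i 0 * u.re + A i 1 * u.im :=
    fun i => by simp [Matrix.mulVec, dotProduct]
  apply Complex.ext <;>
    simp only [hrow, linearCoeff, conjLinearCoeff, Complex.add_re, Complex.add_im, Complex.mul_re,
      Complex.mul_im, Complex.conj_re, Complex.conj_im] <;>
    ring

theorem linCircle_eq_exp_add_exp (θ : ℝ) :
    (⟨linCircle A θ 0, linCircle A θ 1⟩ : ℂ) =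
      linearCoeff A * Complex.exp (θ * Complex.I) +
        conjLinearCoeff A * Complex.exp (-(θ * Complex.I)) := by
  have hconj : conj (Complex.exp (θ * Complex.I)) = Complex.exp (-(θ * Complex.I)) := by
    rw [← Complex.exp_conj, map_mul, Complex.conj_ofReal, Complex.conj_I, mul_neg]
  rw [← hconj, ← mulVec_eq_linearCoeff_mul_add_conjLinearCoeff_mul,
    Complex.exp_ofReal_mul_I_re, Complex.exp_ofReal_mul_I_im]
  rfl

variable {A}

theorem linCircle_sq_add_sq_pos (hA : A.det ≠ 0) (θ : ℝ) :
    0 < linCircle A θ 0 ^ 2 + linCircle A θ 1 ^ 2 := by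
  have hne : linCircle A θ ≠ 0 := by
    intro h₀
    have hv := Matrix.eq_zero_of_mulVec_eq_zero hA h₀
    have hcos : cos θ = 0 := congrFun hv 0
    have hsin : sin θ = 0 := congrFun hv 1
    simpa [hcos, hsin] using sin_sq_add_cos_sq θ
  simpa [dotProduct, Fin.sum_univ_two, ← sq] using Matrix.dotProduct_star_self_pos_iff.mpr hne

theorem poincareIndex_linCircle_of_det_pos (hA : 0 < A.det) :
    poincareIndex (fun θ => ⟨linCircle A θ 0, linCircle A θ 1⟩) = 1 := by
  simpa [linCircle_eq_exp_add_exp] using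
    poincareIndex_exp_add_exp ((det_pos_iff_norm_conjLinearCoeff_lt A).mp hA) 1 (-1)

theorem poincareIndex_linCircle_of_det_neg (hA : A.det < 0) :
    poincareIndex (fun θ => ⟨linCircle A θ 0, linCircle A θ 1⟩) = -1 := by
  simpa [linCircle_eq_exp_add_exp, add_comm] using
    poincareIndex_exp_add_exp ((det_neg_iff_norm_linearCoeff_lt A).mp hA) (-1) 1

end LinearMap

/-- for an invertible `2×2` real matrix `A` and
`γ(θ) = A·(cos θ, sin θ)`, one has `γ₁(θ)² + γ₂(θ)² > 0` for all `θ`, and the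
Poincaré index integral
`(1/(2π)) ∫₀^{2π} (γ₁ γ₂' - γ₂ γ₁')/(γ₁² + γ₂²) dθ`
equals `1` if `det A > 0` and `-1` if `det A < 0`: the index of a
nondegenerate singular point is `-1` for a Saddle and `+1` otherwise. -/
theorem poincare_index_linear (A : Matrix (Fin 2) (Fin 2) ℝ) (hA : A.det ≠ 0) :
    (∀ θ : ℝ, 0 < (linCircle A θ 0) ^ 2 + (linCircle A θ 1) ^ 2) ∧
    (0 < A.det →
      (1 / (2 * π)) * ∫ θ in (0 : ℝ)..(2 * π),
        (linCircle A θ 0 * deriv (fun s => linCircle A s 1) θ -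
          linCircle A θ 1 * deriv (fun s => linCircle A s 0) θ) /
          ((linCircle A θ 0) ^ 2 + (linCircle A θ 1) ^ 2) = 1) ∧
    (A.det < 0 →
      (1 / (2 * π)) * ∫ θ in (0 : ℝ)..(2 * π),
        (linCircle A θ 0 * deriv (fun s => linCircle A s 1) θ -
          linCircle A θ 1 * deriv (fun s => linCircle A s 0) θ) /
          ((linCircle A θ 0) ^ 2 + (linCircle A θ 1) ^ 2) = -1) := by
  exact ⟨linCircle_sq_add_sq_pos hA, poincareIndex_linCircle_of_det_pos,
    poincareIndex_linCircle_of_det_neg⟩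
end
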